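/- arXiv:1206.0213 — 2 statements merged into one kernel-verified Lean document; each statement's English description precedes it below -/
import Mathlib

section
/- Let M be a connected surface, X ⊂ M a closed subset, and Γ a loop in M \ X. Then Γ is null-homotopic in M \ X if and only if for every finite subset Z ⊂ X, the loop Γ is null-homotopic in M \ Z. -/
/-- A loop `γ` (a continuous map on `[0,1]` with equal endpoints) is null-homotopic
within the subset `S`: it is homotopic, through loops contained in `S`, to a
constant loop. -/
def NullHomotopicIn {M : Type*} [TopologicalSpace M]
    (γ : C(unitInterval, M)) (S : Set M) : Prop :=
  ∃ H : C(unitInterval × unitInterval, M),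
    (∀ t, H (0, t) = γ t) ∧
    (∃ c, ∀ t, H (1, t) = c) ∧
    (∀ s, H (s, 0) = H (s, 1)) ∧
    (∀ p, H p ∈ S)

section Helpers

open Set Topology Metric

def LocEuc {M : Type*} [TopologicalSpace M] (U : Set M) : Prop :=
  ∀ y ∈ U, ∃ W : Set M, IsOpen W ∧ y ∈ W ∧ ∃ (k : M → ℂ) (j : ℂ → M),
    ContinuousOn k W ∧ Continuous j ∧ (∀ w ∈ W, j (k w) = w) ∧ ∀ v, j v ∈ U

def IvStep {M : Type*} [TopologicalSpace M] (U : Set M) (T : Set ℝ) (f : ℝ → M) (a b : ℝ) : Prop :=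
  ∀ y ∈ U, (a ∈ T → f a = y) → ∃ g : ℝ → M, ContinuousOn g (Icc a b) ∧ g a = y ∧
    MapsTo g (Icc a b) U ∧ EqOn g f (T ∩ Icc a b)

theorem ivStep_local {M : Type*} [TopologicalSpace M] {U : Set M} (hU : IsPathConnected U)
    {W : Set M} {k : M → ℂ} {j : ℂ → M} (hk : ContinuousOn k W) (hj : Continuous j)
    (hjk : ∀ w ∈ W, j (k w) = w) (hjU : ∀ v, j v ∈ U)
    {T : Set ℝ} (hT : IsClosed T) {f : ℝ → M} (hf : ContinuousOn f T) {a b : ℝ}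
    (hW : T ∩ Icc a b ⊆ f ⁻¹' W) : IvStep U T f a b := by
  intro y hy hay
  rcases (T ∩ Icc a b).eq_empty_or_nonempty with he | hne
  · exact ⟨fun _ => y, continuousOn_const, rfl, fun _ _ => hy, by rw [he]; exact eqOn_empty _ _⟩
  have hc : IsCompact (T ∩ Icc a b) := isCompact_Icc.inter_left hT
  have hkf : ContinuousOn (fun t => k (f t)) (T ∩ Icc a b) :=
    hk.comp (hf.mono inter_subset_left) hW
  obtain ⟨G, hG⟩ := ContinuousMap.exists_restrict_eq hc.isClosed
    (⟨_, continuousOn_iff_continuous_domRestrict.1 hkf⟩ : C(_, ℂ))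
  have hG' : ∀ t ∈ T ∩ Icc a b, G t = k (f t) := fun t ht => congrArg (fun F => F ⟨t, ht⟩) hG
  have hg2 : ∀ t ∈ T ∩ Icc a b, j (G t) = f t := fun t ht => by rw [hG' t ht, hjk _ (hW ht)]
  have hg2c : Continuous (fun t => j (G t)) := hj.comp G.continuous
  set a' := sInf (T ∩ Icc a b) with ha'
  have hmem : a' ∈ T ∩ Icc a b := hc.sInf_mem hne
  have hlow : ∀ t ∈ T ∩ Icc a b, a' ≤ t := fun t ht => csInf_le hc.bddBelow ht
  rcases hmem.2.1.eq_or_lt with h | h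
  · have haT : a ∈ T := h ▸ hmem.1
    refine ⟨fun t => j (G t), hg2c.continuousOn, ?_, fun _ _ => hjU _, hg2⟩
    change j (G a) = y
    rw [hg2 a ⟨haT, h ▸ hmem.2⟩, hay haT]
  · obtain ⟨γ, hγ⟩ := hU.joinedIn y hy (j (G a')) (hjU _)
    have hd : a' - a ≠ 0 := (sub_pos.2 h).ne'
    refine ⟨fun t => if t ≤ a' then γ.extend ((t - a) / (a' - a)) else j (G t), ?_, ?_, ?_, ?_⟩
    · apply Continuous.continuousOn
      apply Continuous.if_le
      · exact γ.continuous_extend.comp (by fun_prop)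
      · exact hg2c
      · fun_prop
      · fun_prop
      · rintro t rfl
        rw [div_self hd]; simp
    · simp [h.le]
    · intro t _
      dsimp only
      split_ifs
      · have : γ.extend ((t - a) / (a' - a)) ∈ range γ := by
          rw [← Path.extend_range]; exact mem_range_self _
        obtain ⟨s, hs⟩ := this
        rw [← hs]; exact hγ s
      · exact hjU _
    · intro t ht
      dsimp only
      split_ifs with h1
      · have : t = a' := le_antisymm h1 (hlow t ht)
        subst this
        rw [div_self hd]
        simpa using hg2 _ ht
      · exact hg2 t ht

theorem IvStep.trans {M : Type*} [TopologicalSpace M] {U : Set M} {T : Set ℝ} {f : ℝ → M}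
    {a b c : ℝ} (hab : a ≤ b) (hbc : b ≤ c) (h1 : IvStep U T f a b) (h2 : IvStep U T f b c) :
    IvStep U T f a c := by
  intro y hy hay
  obtain ⟨g, hg, ga, gU, gf⟩ := h1 y hy hay
  obtain ⟨g', hg', gb, gU', gf'⟩ := h2 (g b) (gU ⟨hab, le_rfl⟩)
    (fun hb => (gf ⟨hb, hab, le_rfl⟩).symm)
  have e1 : EqOn (fun t => if t ≤ b then g t else g' t) g (Icc a b) := fun t ht => if_pos ht.2
  have e2 : EqOn (fun t => if t ≤ b then g t else g' t) g' (Icc b c) := fun t ht => by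
    dsimp only
    split_ifs with h
    · rw [le_antisymm h ht.1, gb]
    · rfl
  have hu : Icc a c = Icc a b ∪ Icc b c := (Icc_union_Icc_eq_Icc hab hbc).symm
  refine ⟨fun t => if t ≤ b then g t else g' t, ?_, ?_, ?_, ?_⟩
  · rw [hu]
    exact (hg.congr e1).union_of_isClosed (hg'.congr e2) isClosed_Icc isClosed_Icc
  · simp [hab, ga]
  · rw [hu]
    exact (gU.congr e1.symm).union (gU'.congr e2.symm)
  · rw [hu]
    rintro t ⟨hT, h | h⟩
    · rw [e1 h]; exact gf ⟨hT, h⟩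
    · rw [e2 h]; exact gf' ⟨hT, h⟩

theorem ivStep_zero_one {M : Type*} [TopologicalSpace M] {U : Set M} (hU : IsPathConnected U)
    (hL : LocEuc U) {T : Set ℝ} (hT : IsClosed T) {f : ℝ → M} (hf : ContinuousOn f T)
    (hfU : MapsTo f T U) : IvStep U T f 0 1 := by
  -- local neighbourhoods
  have key : ∀ x : ℝ, ∃ O : Set ℝ, IsOpen O ∧ x ∈ O ∧ ∀ a b, Icc a b ⊆ O → IvStep U T f a b := by
    intro x
    by_cases hx : x ∈ T
    · obtain ⟨W, hWo, hxW, k, j, hk, hj, hjk, hjU⟩ := hL (f x) (hfU hx)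
      obtain ⟨O, hO, hOT⟩ := continuousOn_iff'.1 hf W hWo
      refine ⟨O, hO, ((Set.ext_iff.1 hOT x).1 ⟨hxW, hx⟩).1, fun a b hab => ?_⟩
      refine ivStep_local hU hk hj hjk hjU hT hf ?_
      rintro t ⟨ht, ht'⟩
      exact ((Set.ext_iff.1 hOT t).2 ⟨hab ht', ht⟩).1
    · refine ⟨Tᶜ, hT.isOpen_compl, hx, fun a b hab y hy _ =>
        ⟨fun _ => y, continuousOn_const, rfl, fun _ _ => hy, ?_⟩⟩
      rintro t ⟨ht, ht'⟩
      exact absurd ht (hab ht')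
  choose O hO hxO hst using key
  obtain ⟨t, ht0, htm, ⟨n, hn⟩, hc⟩ := exists_monotone_Icc_subset_open_cover_unitInterval
    (c := fun x : ℝ => ((↑) : unitInterval → ℝ) ⁻¹' (O x))
    (fun x => (hO x).preimage continuous_subtype_val)
    (fun s _ => mem_iUnion.2 ⟨s, hxO s⟩)
  have step : ∀ m, IvStep U T f (t m) (t (m+1)) := by
    intro m
    obtain ⟨x, hx⟩ := hc m
    refine hst x _ _ fun s hs => ?_
    exact hx (a := ⟨s, (t m).2.1.trans hs.1, hs.2.trans (t (m+1)).2.2⟩) ⟨hs.1, hs.2⟩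
  have all : ∀ m, IvStep U T f 0 (t (m+1)) := by
    intro m
    induction m with
    | zero => simpa [ht0] using step 0
    | succ m ih => exact ih.trans (t (m+1)).2.1 (htm (Nat.le_succ _)) (step _)
  have := all n
  rwa [hn (n+1) (Nat.le_succ n)] at this

theorem circle_ext {M : Type*} [TopologicalSpace M] {U : Set M} (hU : IsPathConnected U)
    (hL : LocEuc U) {T : Set (AddCircle (1:ℝ))} (hT : IsClosed T) {f : AddCircle (1:ℝ) → M}
    (hf : ContinuousOn f T) (hfU : MapsTo f T U) :
    ∃ h : AddCircle (1:ℝ) → M, Continuous h ∧ (∀ x, h x ∈ U) ∧ EqOn h f T := by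
  -- reduce to the case where `0 ∈ T`
  wlog h0 : (0 : AddCircle (1:ℝ)) ∈ T generalizing T f
  · obtain ⟨u, hu⟩ := hU.nonempty
    classical
    have e : EqOn (Function.update f 0 u) f T := fun x hx =>
      Function.update_of_ne (by rintro rfl; exact h0 hx) _ _
    obtain ⟨h, hc, hhU, he⟩ := this (T := T ∪ {0}) (f := Function.update f 0 u)
      (hT.union isClosed_singleton)
      ((hf.congr e).union_of_isClosed (continuousOn_singleton _ _) hT isClosed_singleton)
      ((hfU.congr e.symm).union (by rintro x rfl; simpa using hu)) (Or.inr rfl)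
    exact ⟨h, hc, hhU, fun x hx => (he (Or.inl hx)).trans (e hx)⟩
  have hqc : Continuous (fun t : ℝ => (t : AddCircle (1:ℝ))) := AddCircle.continuous_mk' 1
  obtain ⟨g, gc, g0, gU, gf⟩ := ivStep_zero_one hU hL (T := {t : ℝ | (t : AddCircle (1:ℝ)) ∈ T})
    (hT.preimage hqc) (f := fun t => f t) (hf.comp hqc.continuousOn fun _ h => h)
    (fun t ht => hfU ht) (f 0) (hfU h0) (by simp)
  have h10 : ((1:ℝ) : AddCircle (1:ℝ)) = 0 := AddCircle.coe_period 1
  have g1 : g 1 = f 0 := by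
    have := gf (x := 1) ⟨by simpa [h10] using h0, by simp⟩
    simpa [h10] using this
  have hp : ∀ x : AddCircle (1:ℝ), ∃ t ∈ Ico (0:ℝ) 1, (t : AddCircle (1:ℝ)) = x ∧
      AddCircle.liftIco 1 0 g x = g t := by
    intro x
    obtain ⟨t, ht, rfl⟩ := AddCircle.coe_image_Ico_eq (1:ℝ) 0 ▸ mem_univ x
    rw [zero_add] at ht
    exact ⟨t, ht, rfl, AddCircle.liftIco_zero_coe_apply ht⟩
  refine ⟨AddCircle.liftIco 1 0 g, AddCircle.liftIco_continuous (by simp [g0, g1])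
    (by simpa using gc), fun x => ?_, fun x hx => ?_⟩
  · obtain ⟨t, ht, rfl, h⟩ := hp x
    rw [h]; exact gU ⟨ht.1, ht.2.le⟩
  · obtain ⟨t, ht, rfl, h⟩ := hp x
    rw [h]; exact gf ⟨hx, ht.1, ht.2.le⟩

theorem circle_ext' {M : Type*} [TopologicalSpace M] {U : Set M} (hU : IsPathConnected U)
    (hL : LocEuc U) {T : Set Circle} (hT : IsClosed T) {f : Circle → M}
    (hf : ContinuousOn f T) (hfU : MapsTo f T U) :
    ∃ h : Circle → M, Continuous h ∧ (∀ x, h x ∈ U) ∧ EqOn h f T := by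
  let e := AddCircle.homeomorphCircle (T := (1:ℝ)) one_ne_zero
  obtain ⟨h, hc, hhU, he⟩ := circle_ext hU hL (T := e ⁻¹' T) (hT.preimage e.continuous)
    (f := f ∘ e) (hf.comp e.continuous.continuousOn fun _ h => h) (fun x hx => hfU hx)
  refine ⟨h ∘ e.symm, hc.comp e.symm.continuous, fun x => hhU _, fun x hx => ?_⟩
  have := he (x := e.symm x) (by simpa using hx)
  simpa using this

theorem circle_ext_sphere {M : Type*} [TopologicalSpace M] {U : Set M} (hU : IsPathConnected U)
    (hL : LocEuc U) {T : Set ℂ} (hT : IsClosed T) {f : ℂ → M}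
    (hf : ContinuousOn f T) (hfU : MapsTo f T U) :
    ∃ h : ℂ → M, ContinuousOn h (sphere 0 1) ∧ MapsTo h (sphere 0 1) U ∧
      EqOn h f (T ∩ sphere 0 1) := by
  have hcc : Continuous (fun z : Circle => (z : ℂ)) := continuous_subtype_val
  obtain ⟨h, hc, hhU, he⟩ := circle_ext' hU hL (T := {z : Circle | (z : ℂ) ∈ T})
    (hT.preimage hcc) (f := fun z => f z) (hf.comp hcc.continuousOn fun _ h => h)
    (fun x hx => hfU hx)
  have hex : ∀ w ∈ sphere (0:ℂ) 1, ∃ z : Circle, (z : ℂ) = w := fun w hw => ⟨⟨w, hw⟩, rfl⟩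
  choose! q hq using hex
  have hqc : ContinuousOn q (sphere 0 1) := by
    have hi : IsInducing (fun z : Circle => (z : ℂ)) := IsInducing.subtypeVal
    rw [hi.continuousOn_iff]
    exact continuousOn_id.congr hq
  refine ⟨fun w => h (q w), hc.comp_continuousOn hqc, fun w _ => hhU _, ?_⟩
  rintro w ⟨hw, hw'⟩
  have := he (x := q w) (by simpa [hq w hw'] using hw)
  simpa [hq w hw'] using this

def PP {M : Type*} [TopologicalSpace M] (U F S : Set M) : Prop :=
  ∃ (A : Set M) (f : M → M), IsClosed A ∧ ContinuousOn f A ∧ MapsTo f A U ∧ F ⊆ A ∧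
    EqOn f id F ∧ S ⊆ A

theorem PP.mono {M : Type*} [TopologicalSpace M] {U F S S' : Set M} (h : PP U F S) (hs : S' ⊆ S) :
    PP U F S' := by
  obtain ⟨A, f, h1, h2, h3, h4, h5, h6⟩ := h
  exact ⟨A, f, h1, h2, h3, h4, h5, hs.trans h6⟩

theorem PP.step {M : Type*} [TopologicalSpace M] [T2Space M] {U F S : Set M}
    (hU : IsPathConnected U) (hL : LocEuc U) (e : OpenPartialHomeomorph M ℂ) {c : ℂ} {r : ℝ}
    (hr : 0 < r) (ht : closedBall c r ⊆ e.target)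
    (hF : Disjoint (e.symm '' closedBall c r) F)
    (h : PP U F (S \ e.symm '' ball c r)) {O : Set M} (hO : O ∈ 𝓝 (e.symm c)) :
    PP U F ((S ∪ e.symm '' ball c r) \ O) := by
  obtain ⟨A, f, hA, hf, hfU, hFA, hfF, hSA⟩ := h
  set β := e.symm '' closedBall c r with hβ
  set B := e.symm '' ball c r with hB
  have hβc : IsClosed β :=
    ((isCompact_closedBall c r).image_of_continuousOn (e.continuousOn_symm.mono ht)).isClosed
  have hBo : IsOpen B := e.isOpen_image_symm_of_subset_target isOpen_ball
    (ball_subset_closedBall.trans ht)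
  have hBβ : B ⊆ β := image_mono ball_subset_closedBall
  have hβs : β ⊆ e.source := by
    rintro _ ⟨v, hv, rfl⟩; exact e.map_target (ht hv)
  have heβ : ∀ x ∈ β, e x ∈ closedBall c r := by
    rintro _ ⟨v, hv, rfl⟩; rwa [e.right_inv (ht hv)]
  have heB : ∀ x ∈ β, x ∉ B → ‖e x - c‖ = r := by
    intro x hx hxB
    refine le_antisymm (by simpa [dist_eq_norm] using heβ x hx) (not_lt.1 fun hlt => hxB ?_)
    exact ⟨e x, by simpa [dist_eq_norm] using hlt, e.left_inv (hβs hx)⟩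
  -- parametrisation of the boundary circle
  let σ : ℂ → ℂ := fun w => c + r * w
  have hσc : Continuous σ := by fun_prop
  have hσ : ∀ w ∈ sphere (0:ℂ) 1, σ w ∈ closedBall c r := by
    intro w hw
    have : ‖w‖ = 1 := by simpa using hw
    simp [σ, dist_eq_norm, this, abs_of_pos hr]
  have hτ : ContinuousOn (fun w => e.symm (σ w)) (sphere 0 1) :=
    e.continuousOn_symm.comp hσc.continuousOn fun w hw => ht (hσ w hw)
  have hTc : IsClosed (sphere (0:ℂ) 1 ∩ (fun w => e.symm (σ w)) ⁻¹' A) :=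
    hτ.preimage_isClosed_of_isClosed isClosed_sphere hA
  obtain ⟨h, hhc, hhU, hhf⟩ := circle_ext_sphere hU hL hTc (f := fun w => f (e.symm (σ w)))
    (hf.comp (hτ.mono inter_subset_left) fun w hw => hw.2) (fun w hw => hfU hw.2)
  let π : M → ℂ := fun x => ((‖e x - c‖ : ℝ) : ℂ)⁻¹ * (e x - c)
  have hne : ∀ x ∈ β \ interior O, e x - c ≠ 0 := by
    rintro x ⟨hx, hxO⟩ h0
    apply hxO
    rw [← e.left_inv (hβs hx), sub_eq_zero.1 h0]
    exact mem_interior_iff_mem_nhds.2 hO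
  have hπs : ∀ x ∈ β \ interior O, π x ∈ sphere (0:ℂ) 1 := by
    intro x hx
    have := norm_pos_iff.2 (hne x hx)
    simp [π, this.ne']
  have hπc : ContinuousOn π (β \ interior O) := by
    have he : ContinuousOn (fun x => e x - c) (β \ interior O) :=
      (e.continuousOn.mono (sdiff_subset.trans hβs)).sub continuousOn_const
    refine ContinuousOn.mul (ContinuousOn.inv₀ ?_ ?_) he
    · exact Complex.continuous_ofReal.comp_continuousOn he.norm
    · intro x hx
      simpa using hne x hx
  classical
  let f' : M → M := fun x => if x ∈ β then h (π x) else f x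
  have e2 : EqOn f' (fun x => h (π x)) (β \ interior O) := fun x hx => if_pos hx.1
  have e1 : EqOn f' f (A \ B) := by
    rintro x ⟨hxA, hxB⟩
    by_cases hx : x ∈ β
    · have hn := heB x hx hxB
      have hs : σ (π x) = e x := by
        have : (r : ℂ) ≠ 0 := by exact_mod_cast hr.ne'
        simp only [σ, π, hn]
        field_simp
        ring
      have hsp : π x ∈ sphere (0:ℂ) 1 := by
        simp [π, hn, abs_of_pos hr, hr.ne']
      have hx' : e.symm (σ (π x)) = x := by rw [hs, e.left_inv (hβs hx)]
      have := hhf (x := π x) ⟨⟨hsp, by simpa [hx'] using hxA⟩, hsp⟩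
      simp only [f', if_pos hx, this, hx']
    · exact if_neg hx
  refine ⟨(A \ B) ∪ (β \ interior O), f', (hA.sdiff hBo).union (hβc.sdiff isOpen_interior),
    ?_, ?_, ?_, ?_, ?_⟩
  · exact ((hf.mono sdiff_subset).congr e1).union_of_isClosed
      ((hhc.comp hπc hπs).congr e2) (hA.sdiff hBo) (hβc.sdiff isOpen_interior)
  · refine MapsTo.union ?_ ?_
    · exact (hfU.mono_left sdiff_subset).congr e1.symm
    · exact MapsTo.congr (fun x hx => hhU (hπs x hx)) e2.symm
  · exact fun x hx => Or.inl ⟨hFA hx, fun hxB => disjoint_left.1 hF (hBβ hxB) hx⟩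
  · intro x hx
    rw [e1 ⟨hFA hx, fun hxB => disjoint_left.1 hF (hBβ hxB) hx⟩]
    exact hfF hx
  · rintro x ⟨hx, hxO⟩
    by_cases hxB : x ∈ B
    · exact Or.inr ⟨hBβ hxB, fun h => hxO (interior_subset h)⟩
    · rcases hx with hx | hx
      · exact Or.inl ⟨hSA ⟨hx, hxB⟩, hxB⟩
      · exact absurd hx hxB

/-- A local version of `PP.step`. -/
theorem PP.local {M : Type*} [TopologicalSpace M] [T2Space M] {U F : Set M} (hF : IsClosed F)
    (hU : IsPathConnected U) (hL : LocEuc U) (e : OpenPartialHomeomorph M ℂ) {x : M}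
    (hx : x ∈ e.source) (hxF : x ∉ F) :
    ∃ W ∈ 𝓝 x, ∀ p ∈ W, ∀ q ∈ W, ∀ S : Set M, (∀ O ∈ 𝓝 p, PP U F (S \ O)) →
      ∀ O ∈ 𝓝 q, PP U F ((S ∪ W) \ O) := by
  have hop : IsOpen (e.target ∩ e.symm ⁻¹' Fᶜ) :=
    e.continuousOn_symm.isOpen_inter_preimage e.open_target hF.isOpen_compl
  obtain ⟨r, hr, hball⟩ := Metric.isOpen_iff.1 hop (e x)
    ⟨e.map_source hx, by simpa [e.left_inv hx] using hxF⟩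
  have hsub : ∀ s : Set ℂ, s ⊆ ball (e x) r → s ⊆ e.target := fun s hs v hv => (hball (hs hv)).1
  have hWsub : ball (e x) (r/3) ⊆ ball (e x) r := ball_subset_ball (by linarith)
  refine ⟨e.symm '' ball (e x) (r/3), ?_, ?_⟩
  · exact (e.isOpen_image_symm_of_subset_target isOpen_ball (hsub _ hWsub)).mem_nhds
      ⟨e x, mem_ball_self (by linarith), e.left_inv hx⟩
  rintro _ ⟨p, hp, rfl⟩ _ ⟨q, hq, rfl⟩ S hS O hO
  have hcb : closedBall q (2*r/3) ⊆ ball (e x) r := fun v hv => by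
    rw [mem_ball] at *
    rw [mem_closedBall] at hv
    linarith [dist_triangle v q (e x)]
  have hinc : ball (e x) (r/3) ⊆ ball q (2*r/3) := fun v hv => by
    rw [mem_ball] at *
    linarith [dist_triangle v (e x) q, dist_comm q (e x)]
  have := PP.step (S := S) hU hL e (c := q) (r := 2*r/3) (by linarith) (hsub _ hcb) (by
      rw [disjoint_left]
      rintro _ ⟨v, hv, rfl⟩
      exact (hball (hcb hv)).2)
    (hS _ ((e.isOpen_image_symm_of_subset_target isOpen_ball
      (hsub _ (ball_subset_closedBall.trans hcb))).mem_nhds ⟨p, hinc hp, rfl⟩)) hO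
  exact this.mono (sdiff_subset_sdiff_left (union_subset_union_right _ (image_mono hinc)))

theorem locEuc_of_isOpen {M : Type*} [TopologicalSpace M] {U : Set M} (hU : IsOpen U)
    (he : ∀ x : M, ∃ e : OpenPartialHomeomorph M ℂ, x ∈ e.source) : LocEuc U := by
  intro y hy
  obtain ⟨e, hye⟩ := he y
  have hop : IsOpen (e.target ∩ e.symm ⁻¹' U) :=
    e.continuousOn_symm.isOpen_inter_preimage e.open_target hU
  obtain ⟨r, hr, hball⟩ := Metric.isOpen_iff.1 hop (e y)
    ⟨e.map_source hye, by simpa [e.left_inv hye] using hy⟩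
  let u := OpenPartialHomeomorph.univBall (e y) r
  have hut : u.target = ball (e y) r := OpenPartialHomeomorph.univBall_target _ hr
  have hus : u.source = univ := OpenPartialHomeomorph.univBall_source _ _
  have hu : ∀ v, u v ∈ ball (e y) r := fun v => by
    rw [← hut]; exact u.map_source (by rw [hus]; trivial)
  refine ⟨e.source ∩ e ⁻¹' ball (e y) r, e.isOpen_inter_preimage isOpen_ball,
    ⟨hye, mem_ball_self hr⟩, fun w => u.symm (e w), fun v => e.symm (u v), ?_, ?_, ?_, ?_⟩
  · exact (OpenPartialHomeomorph.continuousOn_univBall_symm (e y) r).comp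
      (e.continuousOn.mono inter_subset_left) fun w hw => hw.2
  · rw [← continuousOn_univ]
    exact e.continuousOn_symm.comp (OpenPartialHomeomorph.continuous_univBall _ _).continuousOn
      fun v _ => (hball (hu v)).1
  · rintro w ⟨hw, hw'⟩
    dsimp only
    rw [u.right_inv (by rw [hut]; exact hw'), e.left_inv hw]
  · exact fun v => (hball (hu v)).2

theorem PP.extend {M : Type*} [TopologicalSpace M] [T2Space M] [LocallyConnectedSpace M]
    {U F Z K T : Set M} (hF : IsClosed F)
    (hU : IsPathConnected U) (hUo : IsOpen U)
    (he : ∀ x : M, ∃ e : OpenPartialHomeomorph M ℂ, x ∈ e.source)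
    (hK : IsCompact K) (hZK : Disjoint Z K)
    (hT : IsCompact T) (hTF : ∀ x ∈ T, x ∉ F ∧ ∃ z ∈ Z, z ∈ connectedComponentIn Fᶜ x) :
    ∀ S, PP U F S → PP U F ((S ∪ T) ∩ K) := by
  have hL := locEuc_of_isOpen hUo he
  refine hT.induction_on (p := fun T => ∀ S, PP U F S → PP U F ((S ∪ T) ∩ K)) ?_ ?_ ?_ ?_
  · exact fun S hS => hS.mono (by simp)
  · intro s t hst ih
    exact fun S hS => (ih S hS).mono (inter_subset_inter_left _ (union_subset_union_right _ hst))
  · intro s t hs ht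
    exact fun S hS => (ht _ (hs S hS)).mono (by
      rintro x ⟨h, hk⟩
      refine ⟨?_, hk⟩
      rcases h with h | h | h
      · exact Or.inl ⟨Or.inl h, hk⟩
      · exact Or.inl ⟨Or.inr h, hk⟩
      · exact Or.inr h)
  · intro x hx
    obtain ⟨hxF, z, hzZ, hz⟩ := hTF x hx
    obtain ⟨e, hxe⟩ := he x
    obtain ⟨W, hW, hWp⟩ := PP.local hF hU hL e hxe hxF
    refine ⟨W, mem_nhdsWithin_of_mem_nhds hW, fun S hS => ?_⟩
    have hxC : x ∈ connectedComponentIn Fᶜ x := mem_connectedComponentIn hxF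
    have move : ∀ {p q : M}, p ∈ connectedComponentIn Fᶜ x → q ∈ connectedComponentIn Fᶜ x →
        ∀ S : Set M, (∀ O ∈ 𝓝 p, PP U F (S \ O)) → (∀ O ∈ 𝓝 q, PP U F (S \ O)) := by
      intro p q hp hq
      refine isPreconnected_connectedComponentIn.induction₂'
        (fun p q => ∀ S : Set M, (∀ O ∈ 𝓝 p, PP U F (S \ O)) → (∀ O ∈ 𝓝 q, PP U F (S \ O)))
        ?_ ?_ hp hq
      · intro y hy
        obtain ⟨e', hye⟩ := he y
        obtain ⟨W', hW', hWp'⟩ := PP.local hF hU hL e' hye (connectedComponentIn_subset _ _ hy)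
        filter_upwards [mem_nhdsWithin_of_mem_nhds hW'] with y' hy'
        exact ⟨fun S hS O hO => (hWp' y (mem_of_mem_nhds hW') y' hy' S hS O hO).mono
            (sdiff_subset_sdiff_left subset_union_left),
          fun S hS O hO => (hWp' y' hy' y (mem_of_mem_nhds hW') S hS O hO).mono
            (sdiff_subset_sdiff_left subset_union_left)⟩
      · exact fun a b c _ _ _ h1 h2 S hS => h2 S (h1 S hS)
    have hxW := mem_of_mem_nhds hW
    have h1 := move hxC hz _ (hWp x hxW x hxW S (fun O _ => hS.mono sdiff_subset))
    have h2 := h1 Kᶜ (hK.isClosed.isOpen_compl.mem_nhds (disjoint_left.1 hZK hzZ))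
    exact h2.mono (by rw [sdiff_compl])

theorem exists_chart_complex {M : Type*} [TopologicalSpace M]
    [ChartedSpace (EuclideanSpace ℝ (Fin 2)) M] (x : M) :
    ∃ e : OpenPartialHomeomorph M ℂ, x ∈ e.source :=
  ⟨(chartAt (EuclideanSpace ℝ (Fin 2)) x).trans
    Complex.orthonormalBasisOneI.repr.symm.toHomeomorph.toOpenPartialHomeomorph, by simp⟩

/-- The closure of a complementary component of a nonempty closed set meets that set. -/
theorem closure_component_meets {M : Type*} [TopologicalSpace M] [ConnectedSpace M]
    [LocallyConnectedSpace M] {F : Set M} (hF : IsClosed F) (hne : F.Nonempty) {x : M}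
    (hx : x ∉ F) : (closure (connectedComponentIn Fᶜ x) ∩ F).Nonempty := by
  by_contra hcon
  rw [not_nonempty_iff_eq_empty] at hcon
  have hsub : closure (connectedComponentIn Fᶜ x) ⊆ Fᶜ := fun y hy hyF =>
    (eq_empty_iff_forall_notMem.1 hcon y) ⟨hy, hyF⟩
  have hxC : x ∈ connectedComponentIn Fᶜ x := mem_connectedComponentIn hx
  have hcl : closure (connectedComponentIn Fᶜ x) ⊆ connectedComponentIn Fᶜ x :=
    isPreconnected_connectedComponentIn.closure.subset_connectedComponentIn
      (subset_closure hxC) hsub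
  have hclopen : IsClopen (connectedComponentIn Fᶜ x) :=
    ⟨closure_subset_iff_isClosed.1 hcl, hF.isOpen_compl.connectedComponentIn⟩
  obtain ⟨y, hy⟩ := hne
  have := hclopen.eq_univ ⟨x, hxC⟩
  exact connectedComponentIn_subset Fᶜ x (this ▸ mem_univ y) hy

theorem NullHomotopicIn.mono {M : Type*} [TopologicalSpace M] {γ : C(unitInterval, M)}
    {S S' : Set M} (h : NullHomotopicIn γ S) (hs : S ⊆ S') : NullHomotopicIn γ S' := by
  obtain ⟨H, h1, h2, h3, h4⟩ := h
  exact ⟨H, h1, h2, h3, fun p => hs (h4 p)⟩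

theorem nullHomotopicIn_of_finite {M : Type*} [TopologicalSpace M]
    [T2Space M] [ConnectedSpace M]
    [ChartedSpace (EuclideanSpace ℝ (Fin 2)) M]
    (X : Set M) (hX : IsClosed X)
    (Γ : C(unitInterval, M)) (hΓ : ∀ t, Γ t ∈ Xᶜ)
    (hZ : ∀ Z : Set M, Z ⊆ X → Z.Finite → NullHomotopicIn Γ Zᶜ) :
    NullHomotopicIn Γ Xᶜ := by
  haveI : LocallyCompactSpace M := ChartedSpace.locallyCompactSpace (EuclideanSpace ℝ (Fin 2)) M
  haveI : LocallyConnectedSpace M :=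
    ChartedSpace.locallyConnectedSpace (EuclideanSpace ℝ (Fin 2)) M
  haveI := ChartedSpace.locallyPathConnectedSpace (EuclideanSpace ℝ (Fin 2)) M
  set F : Set M := range Γ with hFdef
  have hFc : IsCompact F := isCompact_range Γ.continuous
  have hFcl : IsClosed F := hFc.isClosed
  have hFne : F.Nonempty := ⟨Γ 0, mem_range_self _⟩
  set U : Set M := connectedComponentIn Xᶜ (Γ 0) with hUdef
  have hUo : IsOpen U := hX.isOpen_compl.connectedComponentIn
  have hUX : U ⊆ Xᶜ := connectedComponentIn_subset _ _
  have hUpc : IsPathConnected U := by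
    rw [← hUo.isConnected_iff_isPathConnected]
    exact isConnected_connectedComponentIn_iff.2 (hΓ 0)
  have hFU : F ⊆ U := (isPreconnected_range Γ.continuous).subset_connectedComponentIn
    (mem_range_self _) (range_subset_iff.2 hΓ)
  obtain ⟨L, hLc, hFL, hLU⟩ := exists_compact_between hFc hUo hFU
  -- components of the complement of `F`
  let C : M → Set M := fun x => connectedComponentIn Fᶜ x
  have hCo : ∀ x, IsOpen (C x) := fun x => hFcl.isOpen_compl.connectedComponentIn
  have hCself : ∀ x, x ∉ F → x ∈ C x := fun x hx => mem_connectedComponentIn hx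
  have hCeq : ∀ {x y}, y ∈ C x → C x = C y := fun h => connectedComponentIn_eq h
  have hCF : ∀ x, C x ⊆ Fᶜ := fun x => connectedComponentIn_subset _ _
  have hCmeet : ∀ x, x ∉ F → ∀ V : Set M, IsOpen V → F ⊆ V → (C x ∩ V).Nonempty := by
    intro x hx V hV hFV
    obtain ⟨y, hy, hyF⟩ := closure_component_meets hFcl hFne hx
    obtain ⟨w, hw, hw'⟩ := mem_closure_iff.1 hy V hV (hFV hyF)
    exact ⟨w, hw', hw⟩
  -- the finite set
  have hfr : IsCompact (frontier L) := hLc.of_isClosed_subset isClosed_frontier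
    hLc.isClosed.frontier_subset
  have hfrF : ∀ x ∈ frontier L, x ∉ F := fun x hx hxF => hx.2 (hFL hxF)
  obtain ⟨t, ht⟩ := hfr.elim_nhds_subcover C
    (fun x hx => (hCo x).mem_nhds (hCself x (hfrF x hx)))
  have hZex : ∃ Z : Set M, Z ⊆ X ∧ Z.Finite ∧ ∀ x, x ∉ F → (C x ∩ X).Nonempty →
      ∃ z ∈ Z, z ∈ C x := by
    have : ∀ q : M, ∃ z, (C q ∩ X).Nonempty → z ∈ C q ∩ X := fun q => by
      by_cases h : (C q ∩ X).Nonempty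
      · exact ⟨h.some, fun _ => h.some_mem⟩
      · exact ⟨q, fun h' => absurd h' h⟩
    choose z hz using this
    refine ⟨z '' {q | q ∈ t ∧ (C q ∩ X).Nonempty}, ?_, ?_, ?_⟩
    · rintro _ ⟨q, ⟨_, hq⟩, rfl⟩
      exact (hz q hq).2
    · exact (t.finite_toSet.subset fun q hq => hq.1).image z
    · intro x hx hne
      have hmeet : (C x ∩ frontier L).Nonempty := by
        obtain ⟨y, hyC, hyX⟩ := hne
        have hyL : y ∉ L := fun h => hUX (hLU h) hyX
        by_contra hcon
        have hcov : C x ⊆ interior L ∪ Lᶜ := by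
          intro w hw
          by_cases h : w ∈ L
          · by_contra h'
            exact hcon ⟨w, hw, subset_closure h, fun hi => h' (Or.inl hi)⟩
          · exact Or.inr h
        obtain ⟨w, _, hw1, hw2⟩ := (isPreconnected_connectedComponentIn : IsPreconnected (C x))
          _ _ isOpen_interior hLc.isClosed.isOpen_compl hcov
          (hCmeet x hx _ isOpen_interior hFL) ⟨y, hyC, hyL⟩
        exact hw2 (interior_subset hw1)
      obtain ⟨w, hwC, hwL⟩ := hmeet
      obtain ⟨q, hq, hwq⟩ := mem_iUnion₂.1 (ht.2 hwL)
      have hqx : C x = C q := (hCeq hwC).trans (hCeq hwq).symm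
      rw [hqx] at hne ⊢
      exact ⟨z q, ⟨q, ⟨hq, hne⟩, rfl⟩, (hz q hne).1⟩
  obtain ⟨Z, hZX, hZf, hZC⟩ := hZex
  obtain ⟨H, H0, ⟨c, H1⟩, Hl, HZ⟩ := hZ Z hZX hZf
  set K : Set M := range H with hKdef
  have hKc : IsCompact K := isCompact_range H.continuous
  -- good components
  let G : Set M := {x | x ∉ F ∧ ¬ (C x ∩ X).Nonempty}
  have hGo : IsOpen G := by
    rw [isOpen_iff_mem_nhds]
    rintro x ⟨hx, hxX⟩
    filter_upwards [(hCo x).mem_nhds (hCself x hx)] with y hy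
    exact ⟨hCF x hy, by rwa [← hCeq hy]⟩
  have hGcl : IsClosed (F ∪ G) := by
    rw [← isOpen_compl_iff, isOpen_iff_mem_nhds]
    intro x hx
    have hxF : x ∉ F := fun h => hx (Or.inl h)
    have hxX : (C x ∩ X).Nonempty := by
      by_contra h
      exact hx (Or.inr ⟨hxF, h⟩)
    filter_upwards [(hCo x).mem_nhds (hCself x hxF)] with y hy
    rintro (h | h)
    · exact hCF x hy h
    · exact h.2 (by rwa [← hCeq hy])
  have hGU : G ⊆ U := by
    rintro x ⟨hx, hxX⟩
    obtain ⟨w, hwC, hwU⟩ := hCmeet x hx U hUo hFU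
    have h1 : C x ⊆ connectedComponentIn Xᶜ w :=
      IsPreconnected.subset_connectedComponentIn isPreconnected_connectedComponentIn hwC
        (fun y hy hyX => hxX ⟨y, hy, hyX⟩)
    have h2 : U = connectedComponentIn Xᶜ w := connectedComponentIn_eq hwU
    rw [h2]
    exact h1 (hCself x hx)
  have hP0 : PP U F (L ∪ (F ∪ G)) :=
    ⟨_, id, hLc.isClosed.union hGcl, continuousOn_id,
      union_subset hLU (union_subset hFU hGU), fun x hx => Or.inr (Or.inl hx), eqOn_refl _ _,
      Subset.rfl⟩
  have hPK := PP.extend (Z := Z) (K := K) (T := (K \ interior L) \ G) hFcl hUpc hUo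
    exists_chart_complex hKc
    (by
      rw [disjoint_left]
      rintro z hz ⟨p, rfl⟩
      exact HZ p hz)
    ((hKc.diff isOpen_interior).diff hGo)
    (by
      rintro x ⟨⟨_, hxL⟩, hxG⟩
      have hxF : x ∉ F := fun h => hxL (hFL h)
      refine ⟨hxF, hZC x hxF ?_⟩
      by_contra h
      exact hxG ⟨hxF, h⟩) _ hP0
  obtain ⟨A, f, _, hf, hfU, hFA, hfF, hKA⟩ := hPK
  have hKA' : ∀ p, H p ∈ A := by
    intro p
    refine hKA ⟨?_, mem_range_self p⟩
    by_cases h1 : H p ∈ interior L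
    · exact Or.inl (Or.inl (interior_subset h1))
    by_cases h2 : H p ∈ G
    · exact Or.inl (Or.inr (Or.inr h2))
    exact Or.inr ⟨⟨mem_range_self p, h1⟩, h2⟩
  refine ⟨⟨fun p => f (H p), hf.comp_continuous H.continuous hKA'⟩, ?_, ⟨f c, ?_⟩, ?_, ?_⟩
  · intro t
    change f (H (0, t)) = Γ t
    rw [H0]
    exact hfF (mem_range_self t)
  · intro t
    change f (H (1, t)) = f c
    rw [H1]
  · intro s
    change f (H (s, 0)) = f (H (s, 1))
    rw [Hl]
  · exact fun p => hUX (hfU (hKA' p))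

end Helpers

/-- A loop Γ in M \ X (X closed) is null-homotopic in M \ X iff it is
null-homotopic in M \ Z for every finite subset Z ⊆ X. -/
theorem nullhomotopic_iff_nullhomotopic_in_finite_complements
    {M : Type*} [TopologicalSpace M]
    [T2Space M] [SecondCountableTopology M] [ConnectedSpace M]
    [ChartedSpace (EuclideanSpace ℝ (Fin 2)) M]
    (X : Set M) (hX : IsClosed X)
    (Γ : C(unitInterval, M)) (hloop : Γ 0 = Γ 1) (hΓ : ∀ t, Γ t ∈ Xᶜ) :
    NullHomotopicIn Γ Xᶜ ↔
      ∀ Z : Set M, Z ⊆ X → Z.Finite → NullHomotopicIn Γ Zᶜ := by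
  exact ⟨fun h Z hZ _ => h.mono (Set.compl_subset_compl.2 hZ),
    fun h => nullHomotopicIn_of_finite X hX Γ hΓ h⟩
end

section
/- Let F be a homeomorphism of a surface M isotopic to the identity, X ⊂ Fix(F) closed, and I an isotopy on N_X = M \ X from id to F|_{N_X}. Let y ∈ Fix(F) \ X be such that the trajectory loop I(y) is null-homotopic in N_X. Then there exists an isotopy I' on N_X from id to F|_{N_X} with F'_t(y) = y for all t, such that I' is homotopic to I relative to the complement of a compact subset of N_X. -/
open Set Topology Filter

/-- `α` can be moved to `β` by a compactly supported continuous family of homeomorphisms. -/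
def MoveRel {P N : Type*} [TopologicalSpace P] [TopologicalSpace N] (α β : P → N) : Prop :=
  ∃ f g : P → N → N, Continuous (fun q : P × N => f q.1 q.2) ∧
    Continuous (fun q : P × N => g q.1 q.2) ∧
    (∀ p x, g p (f p x) = x) ∧ (∀ p x, f p (g p x) = x) ∧ (∀ p, f p (α p) = β p) ∧
    ∃ K : Set N, IsCompact K ∧ ∀ p, ∀ x ∉ K, f p x = x

theorem MoveRel.symm' {P N : Type*} [TopologicalSpace P] [TopologicalSpace N] {α β : P → N}
    (h : MoveRel α β) : MoveRel β α := by
  obtain ⟨f, g, hf, hg, h1, h2, h3, K, hK, h4⟩ := h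
  refine ⟨g, f, hg, hf, h2, h1, fun p => by rw [← h3, h1], K, hK, fun p x hx => ?_⟩
  conv_lhs => rw [← h4 p x hx]
  exact h1 p x

theorem MoveRel.refl' {P N : Type*} [TopologicalSpace P] [TopologicalSpace N] (α : P → N) :
    MoveRel α α :=
  ⟨fun _ x => x, fun _ x => x, continuous_snd, continuous_snd, fun _ _ => rfl, fun _ _ => rfl,
    fun _ => rfl, ∅, isCompact_empty, fun _ _ _ => rfl⟩

theorem MoveRel.trans' {P N : Type*} [TopologicalSpace P] [TopologicalSpace N] {α β γ : P → N}
    (h : MoveRel α β) (h' : MoveRel β γ) : MoveRel α γ := by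
  obtain ⟨f, g, hf, hg, h1, h2, h3, K, hK, h4⟩ := h
  obtain ⟨f', g', hf', hg', h1', h2', h3', K', hK', h4'⟩ := h'
  refine ⟨fun p x => f' p (f p x), fun p x => g p (g' p x), ?_, ?_, ?_, ?_, ?_, K ∪ K',
    hK.union hK', ?_⟩
  · exact hf'.comp (continuous_fst.prodMk hf)
  · exact hg.comp (continuous_fst.prodMk hg')
  · intro p x; simp only [h1', h1]
  · intro p x; simp only [h2', h2]
  · intro p; simp only [h3, h3']
  · intro p x hx
    simp only [mem_union, not_or] at hx
    simp only [h4 p x hx.1, h4' p x hx.2]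

theorem push_family {P E : Type*} [TopologicalSpace P] [NormedAddCommGroup E] [NormedSpace ℝ E]
    [CompleteSpace E] (c : E) (ρ : ℝ) (hρ : 0 < ρ) (V : P → E) (hV : Continuous V)
    (hb : ∀ p, ‖V p‖ ≤ ρ / 2) :
    ∃ f g : P → E → E, Continuous (fun q : P × E => f q.1 q.2) ∧
      Continuous (fun q : P × E => g q.1 q.2) ∧
      (∀ p x, g p (f p x) = x) ∧ (∀ p x, f p (g p x) = x) ∧
      (∀ p x, V p = 0 → f p x = x) ∧ (∀ p x, 2 * ρ ≤ ‖x - c‖ → f p x = x) ∧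
      (∀ p x, ‖x - c‖ ≤ ρ → f p x = x + V p) := by
  let l : E → ℝ := fun x => max 0 (min 1 (2 - ‖x - c‖ / ρ))
  have hlc : Continuous l := by fun_prop
  have hl0 : ∀ x, 0 ≤ l x := fun x => le_max_left _ _
  have hl1 : ∀ x, l x ≤ 1 := fun x => max_le zero_le_one (min_le_left _ _)
  have hll : ∀ x y, |l x - l y| ≤ ‖x - y‖ / ρ := by
    intro x y
    have h1 : |l x - l y| ≤ |min 1 (2 - ‖x - c‖ / ρ) - min 1 (2 - ‖y - c‖ / ρ)| := by
      have := abs_max_sub_max_le_max 0 (min 1 (2 - ‖x - c‖ / ρ)) 0 (min 1 (2 - ‖y - c‖ / ρ))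
      simpa using this
    have h2 : |min 1 (2 - ‖x - c‖ / ρ) - min 1 (2 - ‖y - c‖ / ρ)| ≤
        |(2 - ‖x - c‖ / ρ) - (2 - ‖y - c‖ / ρ)| := by
      have := abs_min_sub_min_le_max 1 (2 - ‖x - c‖ / ρ) 1 (2 - ‖y - c‖ / ρ)
      simpa using this
    refine h1.trans (h2.trans ?_)
    have h3 : (2 - ‖x - c‖ / ρ) - (2 - ‖y - c‖ / ρ) = (‖y - c‖ - ‖x - c‖) / ρ := by ring
    rw [h3, abs_div, abs_of_pos hρ]
    have := abs_norm_sub_norm_le (y - c) (x - c)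
    rw [sub_sub_sub_cancel_right, norm_sub_rev y x] at this
    gcongr
  have key : ∀ p x y, ‖l x • V p - l y • V p‖ ≤ 1 / 2 * ‖x - y‖ := by
    intro p x y
    rw [← sub_smul, norm_smul, Real.norm_eq_abs]
    calc |l x - l y| * ‖V p‖ ≤ (‖x - y‖ / ρ) * (ρ / 2) :=
          mul_le_mul (hll x y) (hb p) (norm_nonneg _) (by positivity)
      _ = 1 / 2 * ‖x - y‖ := by field_simp
  let f : P → E → E := fun p x => x + l x • V p
  have est : ∀ p q x y, ‖x - y‖ ≤ 2 * (‖f p x - f q y‖ + ‖V p - V q‖) := by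
    intro p q x y
    have e : x - y = (f p x - f q y) - (l x • V p - l y • V p) - l y • (V p - V q) := by
      simp only [f, smul_sub]; abel
    have h1 : ‖x - y‖ ≤ ‖f p x - f q y‖ + ‖l x • V p - l y • V p‖ + ‖l y • (V p - V q)‖ := by
      conv_lhs => rw [e]
      exact (norm_sub_le _ _).trans (by gcongr; exact norm_sub_le _ _)
    have h2 : ‖l y • (V p - V q)‖ ≤ ‖V p - V q‖ := by
      rw [norm_smul, Real.norm_eq_abs, abs_of_nonneg (hl0 y)]
      exact mul_le_of_le_one_left (norm_nonneg _) (hl1 y)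
    have := key p x y
    linarith
  have surj : ∀ p z, ∃ x, f p x = z := by
    intro p z
    have hc : ContractingWith (1 / 2) (fun x => z - l x • V p) := by
      refine ⟨by rw [← NNReal.coe_lt_coe]; norm_num, LipschitzWith.of_dist_le_mul fun x y => ?_⟩
      rw [dist_eq_norm, dist_eq_norm, sub_sub_sub_cancel_left, norm_sub_rev]
      simpa using key p x y
    refine ⟨hc.fixedPoint, ?_⟩
    have h : z - l hc.fixedPoint • V p = hc.fixedPoint := hc.fixedPoint_isFixedPt
    simp only [f]
    nth_rewrite 1 [← h]
    abel
  choose g hg using surj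
  refine ⟨f, g, by fun_prop, ?_, ?_, hg, ?_, ?_, ?_⟩
  · rw [continuous_iff_continuousAt]
    rintro ⟨p, z⟩
    rw [ContinuousAt, tendsto_iff_norm_sub_tendsto_zero]
    refine squeeze_zero (fun _ => norm_nonneg _)
      (g := fun q : P × E => 2 * (‖q.2 - z‖ + ‖V q.1 - V p‖)) (fun q => ?_) ?_
    · have := est q.1 p (g q.1 q.2) (g p z)
      rwa [hg, hg] at this
    · have : Continuous (fun q : P × E => 2 * (‖q.2 - z‖ + ‖V q.1 - V p‖)) := by fun_prop
      simpa using this.tendsto (p, z)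
  · intro p x
    have := est p p (g p (f p x)) x
    rw [hg] at this
    simp at this
    exact sub_eq_zero.1 this
  · intro p x h; simp [f, h]
  · intro p x h
    have : l x = 0 := by
      have : 2 ≤ ‖x - c‖ / ρ := by rw [le_div_iff₀ hρ]; exact h
      exact max_eq_left ((min_le_right _ _).trans (by linarith))
    simp [f, this]
  · intro p x h
    have : l x = 1 := by
      have : ‖x - c‖ / ρ ≤ 1 := by rw [div_le_one hρ]; exact h
      simp only [l]
      rw [min_eq_left (by linarith)]; simp
    simp [f, this]

theorem transport_cont {P N E : Type*} [TopologicalSpace P] [TopologicalSpace N] [T2Space N]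
    [TopologicalSpace E] (e : OpenPartialHomeomorph N E) (B : Set E) (hB : IsCompact B)
    (hBt : B ⊆ e.target) (f : P → E → E) (hf : Continuous (fun q : P × E => f q.1 q.2))
    (hfB : ∀ p x, x ∉ B → f p x = x) (hfm : ∀ p x, x ∈ e.target → f p x ∈ e.target)
    (F : P → N → N) (hF : ∀ p x, x ∈ e.source → F p x = e.symm (f p (e x)))
    (hF' : ∀ p x, x ∉ e.source → F p x = x) :
    Continuous (fun q : P × N => F q.1 q.2) ∧ IsCompact (e.symm '' B) ∧
      ∀ p, ∀ x ∉ e.symm '' B, F p x = x := by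
  have hK : IsCompact (e.symm '' B) := hB.image_of_continuousOn (e.continuousOn_symm.mono hBt)
  have hid : ∀ p, ∀ x ∉ e.symm '' B, F p x = x := by
    intro p x hx
    by_cases hxs : x ∈ e.source
    · rw [hF p x hxs, hfB, e.left_inv hxs]
      intro h
      exact hx ⟨_, h, e.left_inv hxs⟩
    · exact hF' p x hxs
  refine ⟨?_, hK, hid⟩
  rw [continuous_iff_continuousAt]
  rintro ⟨p, x⟩
  by_cases hxs : x ∈ e.source
  · have h1 : ContinuousAt (fun q : P × N => e.symm (f q.1 (e q.2))) (p, x) := by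
      have h2 : ContinuousAt (fun q : P × N => (q.1, e q.2)) (p, x) :=
        continuousAt_fst.prodMk ((e.continuousAt hxs).comp continuousAt_snd)
      have h3 : ContinuousAt (fun q : P × N => f q.1 (e q.2)) (p, x) :=
        ContinuousAt.comp (f := fun q : P × N => (q.1, e q.2)) (hf.continuousAt) h2
      exact ContinuousAt.comp (g := e.symm) (f := fun q : P × N => f q.1 (e q.2))
        (e.symm.continuousAt (hfm p _ (e.map_source hxs))) h3
    refine h1.congr ?_
    have : ∀ᶠ q : P × N in 𝓝 (p, x), q.2 ∈ e.source :=
      continuousAt_snd.eventually (e.open_source.mem_nhds hxs)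
    filter_upwards [this] with q hq
    exact (hF _ _ hq).symm
  · have hx : x ∉ e.symm '' B := by
      rintro ⟨b, hb, rfl⟩
      exact hxs (e.map_target (hBt hb))
    refine (continuousAt_snd (p := (p, x))).congr ?_
    have : ∀ᶠ q : P × N in 𝓝 (p, x), q.2 ∈ (e.symm '' B)ᶜ :=
      continuousAt_snd.eventually (hK.isClosed.isOpen_compl.mem_nhds hx)
    filter_upwards [this] with q hq
    exact (hid _ _ hq).symm

abbrev E2 := EuclideanSpace ℝ (Fin 2)

theorem local_move {P N : Type*} [TopologicalSpace P] [TopologicalSpace N] [T2Space N]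
    (e : OpenPartialHomeomorph N E2) (c : E2) (ρ : ℝ) (hρ : 0 < ρ)
    (hBt : Metric.closedBall c (2 * ρ) ⊆ e.target) (J C : Set P) (hJ : IsOpen J)
    (hC : IsClosed C) (hCJ : C ⊆ J) (α β : P → N) (hα : Continuous α) (hβ : Continuous β)
    (hαJ : ∀ p ∈ J, α p ∈ e.source ∧ ‖e (α p) - c‖ ≤ ρ / 4)
    (hβJ : ∀ p ∈ J, β p ∈ e.source ∧ ‖e (β p) - c‖ ≤ ρ / 4)
    (heq : ∀ p, p ∉ C → α p = β p) : MoveRel α β := by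
  classical
  let V : P → E2 := fun p => if p ∈ J then e (β p) - e (α p) else 0
  have hV0 : ∀ p, p ∉ C → V p = 0 := by
    intro p hp
    simp [V, heq p hp]
  have hV : Continuous V := by
    rw [continuous_iff_continuousAt]
    intro p
    by_cases hp : p ∈ J
    · have h1 : ContinuousAt (fun p => e (β p) - e (α p)) p :=
        (ContinuousAt.comp (g := e) (e.continuousAt (hβJ p hp).1) hβ.continuousAt).sub
          (ContinuousAt.comp (g := e) (e.continuousAt (hαJ p hp).1) hα.continuousAt)
      refine h1.congr ?_
      filter_upwards [hJ.mem_nhds hp] with q hq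
      simp [V, hq]
    · refine (continuousAt_const (y := (0 : E2))).congr ?_
      filter_upwards [hC.isOpen_compl.mem_nhds (fun h => hp (hCJ h))] with q hq
      exact (hV0 q hq).symm
  have hb : ∀ p, ‖V p‖ ≤ ρ / 2 := by
    intro p
    by_cases hp : p ∈ J
    · have : V p = (e (β p) - c) - (e (α p) - c) := by simp [V, hp]
      rw [this]
      have := norm_sub_le (e (β p) - c) (e (α p) - c)
      linarith [(hαJ p hp).2, (hβJ p hp).2]
    · simp [V, hp]; positivity
  obtain ⟨f, g, hf, hg, gf, fg, f0, fout, fin⟩ := push_family c ρ hρ V hV hb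
  have hfB : ∀ p x, x ∉ Metric.closedBall c (2 * ρ) → f p x = x := by
    intro p x hx
    apply fout
    rw [Metric.mem_closedBall, dist_eq_norm] at hx
    linarith
  have hgB : ∀ p x, x ∉ Metric.closedBall c (2 * ρ) → g p x = x := by
    intro p x hx
    conv_lhs => rw [← hfB p x hx]
    exact gf p x
  have hfm : ∀ p x, x ∈ e.target → f p x ∈ e.target := by
    intro p x hx
    by_contra hcon
    have h1 := hgB p _ (fun h => hcon (hBt h))
    rw [gf] at h1
    exact hcon (h1 ▸ hx)
  have hgm : ∀ p x, x ∈ e.target → g p x ∈ e.target := by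
    intro p x hx
    by_contra hcon
    have h1 := hfB p _ (fun h => hcon (hBt h))
    rw [fg] at h1
    exact hcon (h1 ▸ hx)
  let F : P → N → N := fun p x => if x ∈ e.source then e.symm (f p (e x)) else x
  let G : P → N → N := fun p x => if x ∈ e.source then e.symm (g p (e x)) else x
  have hF : ∀ p x, x ∈ e.source → F p x = e.symm (f p (e x)) := fun p x hx => if_pos hx
  have hF' : ∀ p x, x ∉ e.source → F p x = x := fun p x hx => if_neg hx
  have hG : ∀ p x, x ∈ e.source → G p x = e.symm (g p (e x)) := fun p x hx => if_pos hx
  have hG' : ∀ p x, x ∉ e.source → G p x = x := fun p x hx => if_neg hx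
  have hBc : IsCompact (Metric.closedBall c (2 * ρ)) := isCompact_closedBall _ _
  obtain ⟨cF, cK, cid⟩ := transport_cont e _ hBc hBt f hf hfB hfm F hF hF'
  obtain ⟨cG, -, -⟩ := transport_cont e _ hBc hBt g hg hgB hgm G hG hG'
  refine ⟨F, G, cF, cG, ?_, ?_, ?_, _, cK, cid⟩
  · intro p x
    by_cases hx : x ∈ e.source
    · have h1 := hfm p _ (e.map_source hx)
      rw [hF p x hx, hG _ _ (e.map_target h1), e.right_inv h1, gf, e.left_inv hx]
    · rw [hF' p x hx, hG' p x hx]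
  · intro p x
    by_cases hx : x ∈ e.source
    · have h1 := hgm p _ (e.map_source hx)
      rw [hG p x hx, hF _ _ (e.map_target h1), e.right_inv h1, fg, e.left_inv hx]
    · rw [hG' p x hx, hF' p x hx]
  · intro p
    by_cases hp : p ∈ J
    · obtain ⟨h1, h2⟩ := hαJ p hp
      rw [hF p _ h1, fin p _ (by linarith)]
      have : e (α p) + V p = e (β p) := by simp [V, hp]
      rw [this, e.left_inv (hβJ p hp).1]
    · have hpC : p ∉ C := fun h => hp (hCJ h)
      rw [← heq p hpC]
      by_cases hx : α p ∈ e.source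
      · rw [hF p _ hx, f0 p _ (hV0 p hpC), e.left_inv hx]
      · exact hF' p _ hx

theorem near_move {P N : Type*} [TopologicalSpace P] [CompactSpace P] [T2Space P]
    [TopologicalSpace N] [T2Space N]
    (hloc : ∀ x : N, ∃ e : OpenPartialHomeomorph N E2, x ∈ e.source)
    (h : ℝ × P → N) (hh : Continuous h) (r₀ : ℝ) :
    ∀ᶠ r in 𝓝 r₀, MoveRel (fun p => h (r₀, p)) (fun p => h (r, p)) := by
  have H : ∀ p : P, ∃ (e : OpenPartialHomeomorph N E2) (c : E2) (ρ : ℝ), 0 < ρ ∧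
      Metric.closedBall c (2 * ρ) ⊆ e.target ∧ ∃ J : Set P, IsOpen J ∧ p ∈ J ∧ ∃ ε > 0,
        ∀ r, |r - r₀| < ε → ∀ q ∈ J, h (r, q) ∈ e.source ∧ ‖e (h (r, q)) - c‖ ≤ ρ / 4 := by
    intro p
    obtain ⟨e, he⟩ := hloc (h (r₀, p))
    obtain ⟨R, hR, hRt⟩ := Metric.nhds_basis_closedBall.mem_iff.1
      (e.open_target.mem_nhds (e.map_source he))
    refine ⟨e, e (h (r₀, p)), R / 2, by positivity, by convert hRt using 2; ring, ?_⟩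
    have h1 : ContinuousAt (fun z : ℝ × P => ‖e (h z) - e (h (r₀, p))‖) (r₀, p) :=
      ((ContinuousAt.comp (g := e) (e.continuousAt he) hh.continuousAt).sub
        continuousAt_const).norm
    have h2 : ∀ᶠ z : ℝ × P in 𝓝 (r₀, p), ‖e (h z) - e (h (r₀, p))‖ < R / 2 / 4 :=
      h1.eventually_lt continuousAt_const (by simpa using by positivity)
    have h3 : ∀ᶠ z : ℝ × P in 𝓝 (r₀, p), h z ∈ e.source :=
      hh.continuousAt.eventually (e.open_source.mem_nhds he)
    have h4 := h3.and h2
    rw [nhds_prod_eq, Filter.eventually_prod_iff] at h4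
    obtain ⟨pa, ha, pb, hb, hab⟩ := h4
    obtain ⟨ε, hε, hεa⟩ := Metric.eventually_nhds_iff.1 ha
    obtain ⟨J, hJb, hJo, hpJ⟩ := eventually_nhds_iff.1 hb
    refine ⟨J, hJo, hpJ, ε, hε, fun r hr q hq => ?_⟩
    have := hab (hεa (by rwa [Real.dist_eq])) (hJb q hq)
    exact ⟨this.1, this.2.le⟩
  choose e c ρ hρ hB J hJ hpJ ε hε hb using H
  obtain ⟨t, ht⟩ := isCompact_univ.elim_finite_subcover J hJ
    (fun p _ => mem_iUnion.2 ⟨p, hpJ p⟩)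
  obtain ⟨μ, hμ⟩ := PartitionOfUnity.exists_isSubordinate (s := univ) isClosed_univ
    (fun i : t => J i) (fun i => hJ i) (by
      intro p hp
      have := ht hp
      simp only [mem_iUnion] at this ⊢
      obtain ⟨i, hi, hpi⟩ := this
      exact ⟨⟨i, hi⟩, hpi⟩)
  have hev : ∀ᶠ r in 𝓝 r₀, ∀ i : t, |r - r₀| < ε i := by
    rw [Filter.eventually_all]
    intro i
    exact Metric.eventually_nhds_iff.2 ⟨ε i, hε i, fun r hr => by rwa [Real.dist_eq] at hr⟩
  filter_upwards [hev] with r hr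
  have hsum1 : ∀ p, ∑ i, μ i p = 1 := by
    intro p
    rw [← finsum_eq_sum_of_fintype]
    exact μ.sum_eq_one (mem_univ p)
  have hle : ∀ (s : Finset t) p, |∑ i ∈ s, μ i p| ≤ 1 := by
    intro s p
    rw [abs_of_nonneg (Finset.sum_nonneg fun i _ => μ.nonneg i p), ← hsum1 p]
    exact Finset.sum_le_sum_of_subset_of_nonneg (Finset.subset_univ s)
      (fun i _ _ => μ.nonneg i p)
  let k : Finset t → P → N := fun s p => h (r₀ + (r - r₀) * ∑ i ∈ s, μ i p, p)
  have hkc : ∀ s, Continuous (k s) := by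
    intro s
    refine hh.comp (Continuous.prodMk ?_ continuous_id)
    exact continuous_const.add (continuous_const.mul
      (continuous_finsetSum _ fun i _ => (μ i).continuous))
  have hkJ : ∀ s (i : t), ∀ p ∈ J i, k s p ∈ (e i).source ∧ ‖e i (k s p) - c i‖ ≤ ρ i / 4 := by
    intro s i p hp
    refine hb i _ ?_ p hp
    rw [add_sub_cancel_left, abs_mul]
    exact (mul_le_of_le_one_right (abs_nonneg _) (hle s p)).trans_lt (hr i)
  have main : ∀ s : Finset t, MoveRel (k ∅) (k s) := by
    classical
    intro s
    induction s using Finset.induction_on with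
    | empty => exact MoveRel.refl' _
    | insert i s his ih =>
      refine ih.trans' ?_
      refine local_move (e i) (c i) (ρ i) (hρ i) (hB i) (J i) (tsupport (μ i)) (hJ i)
        (isClosed_tsupport _) (hμ i) _ _ (hkc _) (hkc _) (hkJ s i) (hkJ _ i) ?_
      intro p hp
      have : μ i p = 0 := image_eq_zero_of_notMem_tsupport hp
      simp only [k, Finset.sum_insert his, this, zero_add]
  have := main Finset.univ
  simp only [k, hsum1, Finset.sum_empty, mul_zero, add_zero, mul_one, add_sub_cancel] at this
  exact this

theorem homotopy_move {P N : Type*} [TopologicalSpace P] [CompactSpace P] [T2Space P]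
    [TopologicalSpace N] [T2Space N]
    (hloc : ∀ x : N, ∃ e : OpenPartialHomeomorph N E2, x ∈ e.source)
    (h : ℝ × P → N) (hh : Continuous h) (a b : ℝ) :
    MoveRel (fun p => h (a, p)) (fun p => h (b, p)) := by
  let Q : ℝ → ℝ → Prop := fun a b => MoveRel (fun p => h (a, p)) (fun p => h (b, p))
  have : Std.Symm Q := ⟨fun _ _ h1 => h1.symm'⟩
  have : IsTrans ℝ Q := ⟨fun _ _ _ h1 h2 => h1.trans' h2⟩
  exact PreconnectedSpace.induction₂ Q (fun r => near_move hloc h hh r) inferInstance a b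

/-- If the trajectory loop I(y) of a fixed point y ∈ Fix(F) \ X is
null-homotopic in N_X = M \ X, then the isotopy I can be modified, by a homotopy
relative to the complement of some compact subset of N_X, into an isotopy I' from
the identity to F|_{N_X} that fixes y at all times. -/
theorem isotopy_fixing_contractile_point
    {M : Type*} [TopologicalSpace M]
    [T2Space M] [SecondCountableTopology M] [ConnectedSpace M]
    [ChartedSpace (EuclideanSpace ℝ (Fin 2)) M]
    (F : M ≃ₜ M) (X : Set M) (hXclosed : IsClosed X)
    (hXfix : ∀ x ∈ X, F x = x)
    -- the isotopy I = (F_t) on N_X = M \ X, from the identity to F|_{N_X}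
    (I : unitInterval → ↥Xᶜ ≃ₜ ↥Xᶜ)
    (hIcont : Continuous (fun p : unitInterval × ↥Xᶜ => I p.1 p.2))
    (hIcont' : Continuous (fun p : unitInterval × ↥Xᶜ => (I p.1).symm p.2))
    (hI0 : I 0 = Homeomorph.refl ↥Xᶜ)
    (hI1 : ∀ z : ↥Xᶜ, ((I 1 z : M)) = F (z : M))
    -- the fixed point y ∈ Fix(F) \ X
    (y : ↥Xᶜ) (hy : F (y : M) = (y : M))
    -- the trajectory loop I(y) is null-homotopic in N_X
    (hcontr : ∃ H : C(unitInterval × unitInterval, ↥Xᶜ),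
      (∀ t, H (0, t) = I t y) ∧ (∃ c, ∀ t, H (1, t) = c) ∧
      (∀ s, H (s, 0) = H (s, 1))) :
    ∃ I' : unitInterval → ↥Xᶜ ≃ₜ ↥Xᶜ,
      Continuous (fun p : unitInterval × ↥Xᶜ => I' p.1 p.2) ∧
      Continuous (fun p : unitInterval × ↥Xᶜ => (I' p.1).symm p.2) ∧
      I' 0 = Homeomorph.refl ↥Xᶜ ∧
      (∀ z : ↥Xᶜ, ((I' 1 z : M)) = F (z : M)) ∧
      -- I' fixes y at all times
      (∀ t, I' t y = y) ∧
      -- I' is homotopic to I relative to the complement of a compact set K ⊆ N_X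
      (∃ K : Set M, K ⊆ Xᶜ ∧ IsCompact K ∧
        ∃ H : unitInterval → unitInterval → ↥Xᶜ ≃ₜ ↥Xᶜ,
          Continuous (fun p : (unitInterval × unitInterval) × ↥Xᶜ => H p.1.1 p.1.2 p.2) ∧
          (∀ t, H 0 t = I t) ∧ (∀ t, H 1 t = I' t) ∧
          (∀ s t, ∀ z : ↥Xᶜ, (z : M) ∉ K → H s t z = I t z)) := by
  classical
  obtain ⟨φ, hφ0, ⟨c, hφ1⟩, hφp⟩ := hcontr
  have hloc : ∀ x : ↥Xᶜ, ∃ e : OpenPartialHomeomorph ↥Xᶜ E2, x ∈ e.source := by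
    intro x
    let U : TopologicalSpace.Opens M := ⟨Xᶜ, hXclosed.isOpen_compl⟩
    refine ⟨(chartAt E2 (x : M)).subtypeRestr (s := U) ⟨x⟩, ?_⟩
    rw [OpenPartialHomeomorph.subtypeRestr_source]
    exact mem_chart_source E2 (x : M)
  -- the loop of paths s ↦ φ (s, t), as a map into path space
  let ψ : C(unitInterval, C(unitInterval, ↥Xᶜ)) :=
    (φ.comp ⟨fun q : unitInterval × unitInterval => (q.2, q.1), by fun_prop⟩).curry
  have hψ : ∀ t s, ψ t s = φ (s, t) := fun t s => rfl
  let T : Set C(unitInterval, ↥Xᶜ) := Set.range ψ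
  have : CompactSpace T := isCompact_iff_compactSpace.1 (isCompact_range ψ.continuous)
  let τ : unitInterval → T := fun t => ⟨ψ t, t, rfl⟩
  have hτ : Continuous τ := ψ.continuous.subtype_mk _
  have hτs : ∀ t s, (τ t).1 s = φ (s, t) := fun t s => rfl
  have hτ01 : τ 1 = τ 0 := by
    apply Subtype.ext
    ext s : 1
    rw [hτs, hτs, hφp]
  let h : ℝ × (unitInterval × T) → ↥Xᶜ := fun q =>
    q.2.2.1 (Set.projIcc 0 1 zero_le_one (q.1 * (q.2.1 : ℝ)))
  have hh : Continuous h := by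
    have h1 : Continuous fun q : ℝ × (unitInterval × T) => (q.2.2 : C(unitInterval, ↥Xᶜ)) := by
      fun_prop
    have h2 : Continuous fun q : ℝ × (unitInterval × T) =>
        Set.projIcc (0 : ℝ) 1 zero_le_one (q.1 * (q.2.1 : ℝ)) :=
      continuous_projIcc.comp (by fun_prop)
    exact h1.eval h2
  obtain ⟨f, g, hf, hg, gf, fg, fm, K, hK, fid⟩ := homotopy_move hloc h hh 0 1
  have fm' : ∀ s t, f (s, τ t) (φ (0, t)) = φ (s, t) := by
    intro s t
    have := fm (s, τ t)
    simpa [h, hτs] using this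
  have gm' : ∀ s t, g (s, τ t) (φ (s, t)) = φ (0, t) := by
    intro s t
    rw [← fm', gf]
  have gid : ∀ p, ∀ x ∉ K, g p x = x := by
    intro p x hx
    conv_lhs => rw [← fid p x hx]
    exact gf p x
  let A : unitInterval → unitInterval → ↥Xᶜ → ↥Xᶜ := fun s t x =>
    f (0, τ 0) (g (s, τ 0) (f (s, τ t) (g (0, τ t) (I t x))))
  let B : unitInterval → unitInterval → ↥Xᶜ → ↥Xᶜ := fun s t x =>
    (I t).symm (f (0, τ t) (g (s, τ t) (f (s, τ 0) (g (0, τ 0) x))))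
  have cf : ∀ {Z : Type _} [TopologicalSpace Z] (a : Z → unitInterval) (b : Z → unitInterval)
      (x : Z → ↥Xᶜ), Continuous a → Continuous b → Continuous x →
      Continuous (fun z => f (a z, τ (b z)) (x z)) := fun a b x ha hb hx =>
    hf.comp ((ha.prodMk (hτ.comp hb)).prodMk hx)
  have cg : ∀ {Z : Type _} [TopologicalSpace Z] (a : Z → unitInterval) (b : Z → unitInterval)
      (x : Z → ↥Xᶜ), Continuous a → Continuous b → Continuous x →
      Continuous (fun z => g (a z, τ (b z)) (x z)) := fun a b x ha hb hx =>
    hg.comp ((ha.prodMk (hτ.comp hb)).prodMk hx)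
  have hA : Continuous (fun p : (unitInterval × unitInterval) × ↥Xᶜ => A p.1.1 p.1.2 p.2) := by
    refine cf _ _ _ continuous_const continuous_const ?_
    refine cg _ _ _ (by fun_prop) continuous_const ?_
    refine cf _ _ _ (by fun_prop) (by fun_prop) ?_
    refine cg _ _ _ continuous_const (by fun_prop) ?_
    exact hIcont.comp (f := fun p : (unitInterval × unitInterval) × ↥Xᶜ => (p.1.2, p.2))
      (by fun_prop)
  have hB : Continuous (fun p : (unitInterval × unitInterval) × ↥Xᶜ => B p.1.1 p.1.2 p.2) := by
    refine hIcont'.comp (f := fun p : (unitInterval × unitInterval) × ↥Xᶜ =>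
      (p.1.2, f (0, τ p.1.2) (g (p.1.1, τ p.1.2) (f (p.1.1, τ 0) (g (0, τ 0) p.2)))))
      (Continuous.prodMk (by fun_prop) ?_)
    refine cf _ _ _ continuous_const (by fun_prop) ?_
    refine cg _ _ _ (by fun_prop) (by fun_prop) ?_
    refine cf _ _ _ (by fun_prop) continuous_const ?_
    exact cg _ _ _ continuous_const continuous_const (by fun_prop)
  have BA : ∀ s t x, B s t (A s t x) = x := by
    intro s t x
    simp only [A, B, gf, fg, Homeomorph.symm_apply_apply]
  have AB : ∀ s t x, A s t (B s t x) = x := by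
    intro s t x
    simp only [A, B, gf, fg, Homeomorph.apply_symm_apply]
  let H : unitInterval → unitInterval → ↥Xᶜ ≃ₜ ↥Xᶜ := fun s t =>
    { toFun := A s t
      invFun := B s t
      left_inv := BA s t
      right_inv := AB s t
      continuous_toFun :=
        hA.comp (f := fun x : ↥Xᶜ => ((s, t), x)) (by fun_prop)
      continuous_invFun :=
        hB.comp (f := fun x : ↥Xᶜ => ((s, t), x)) (by fun_prop) }
  have hHA : ∀ s t x, H s t x = A s t x := fun _ _ _ => rfl
  have hHB : ∀ s t x, (H s t).symm x = B s t x := fun _ _ _ => rfl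
  refine ⟨fun t => H 1 t, ?_, ?_, ?_, ?_, ?_, ?_⟩
  · exact hA.comp (f := fun p : unitInterval × ↥Xᶜ => (((1 : unitInterval), p.1), p.2))
      (by fun_prop)
  · exact hB.comp (f := fun p : unitInterval × ↥Xᶜ => (((1 : unitInterval), p.1), p.2))
      (by fun_prop)
  · ext x : 1
    simp only [hHA, A, gf, fg, hI0]
  · intro z
    rw [← hI1 z]
    simp only [hHA, A, hτ01, gf, fg]
  · intro t
    have h0 : φ (0, 0) = y := by rw [hφ0, hI0]; rfl
    simp only [hHA, A]
    rw [← hφ0, gm', fm', hφ1, ← hφ1 0, gm', fm', h0]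
  · refine ⟨Subtype.val '' ((fun p : unitInterval × ↥Xᶜ => (I p.1).symm p.2) ''
      (Set.univ ×ˢ K)), ?_, ?_, H, hA, ?_, fun _ => rfl, ?_⟩
    · rintro _ ⟨x, -, rfl⟩
      exact x.2
    · exact ((isCompact_univ.prod hK).image hIcont').image continuous_subtype_val
    · intro t
      ext x : 1
      simp only [hHA, A, fg]
    · intro s t z hz
      have hn : I t z ∉ K := by
        intro hk
        exact hz ⟨z, ⟨(t, I t z), ⟨trivial, hk⟩, by simp⟩, rfl⟩
      simp only [hHA, A, gid _ _ hn, fid _ _ hn]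
end
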